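/- arXiv:1411.2907 — 3 statements merged into one kernel-verified Lean document; each statement's English description precedes it below -/
import Mathlib

section
/- Let B be a convex set of probability densities with respect to a dominating measure ν, let p_0 be a fixed density, and let α, β > 0 and u ∈ (0,1). Then there exists a test φ (a measurable function of the data with values in [0,1]) such that sup_{f∈B} ( α P_0 φ + β P_f (1 − φ) ) = sup_{f∈B} ∫ min{α p_0, β f} dν ≤ α^{1−u} β^u sup_{f∈B} ∫ p_0^{1−u} f^u dν. Consequently, setting λ = α/β, one can choose φ with P_0 φ ≤ λ^{−u} sup_{f∈B} P_0 (p_0/f)^{−u} and sup_{f∈B} P_f(1 − φ) ≤ λ^{1−u} sup_{f∈B} P_0 (p_0/f)^{−u}. -/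
/-!
For a fixed `f` the smallest value of `α P₀ φ + β P_f (1 - φ)` over tests is `∫ min (α p₀) (β f)`, so
the equality of suprema is a minimax statement: one test must serve every `f ∈ B`. Such a test comes
from Hahn–Banach. In `L¹` of the probability measure `p₀ ν`, the functional
`M g = ∫ min α (β g)` is continuous and concave, and it is at most `V`, the right-hand supremum, on
the convex set of ratios `f / p₀`. A separating affine function `c + w` satisfies `M ≤ c + w`
everywhere and `c + w ≤ V` on the ratios (`exists_separating_test`). Evaluating `M ≤ c + w` on large
multiples of indicators forces `0 ≤ w ≤ β`, so `w` is integration against `β (1 - φ)` for a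
test `φ` (`dual_L1_eq_integral`), and evaluating it at the constant `α / β` gives
`α P₀ φ ≤ c`; together these yield the bound by `V` for every `f`.

The remaining inequalities follow from `min a b ≤ a ^ (1 - u) * b ^ u` and from dropping one of the
two nonnegative error terms. All suprema are of bounded families, since
`p₀ ^ (1 - u) * f ^ u ≤ (1 - u) p₀ + u f`.
-/

open MeasureTheory
open scoped ENNReal

/-- `p` is a probability density with respect to `ν`. -/
def IsDensity {𝒴 : Type*} [MeasurableSpace 𝒴] (ν : Measure 𝒴) (p : 𝒴 → ℝ) : Prop :=
  Measurable p ∧ (∀ y, 0 ≤ p y) ∧ ∫ y, p y ∂ν = 1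

/-- On indicators, a continuous functional on `L¹` of a probability measure is integration
against an integrable function, obtained from the Riesz representation of its restriction to `L²`. -/
lemma exists_integrable_repr {𝒴 : Type*} [MeasurableSpace 𝒴] (μ : Measure 𝒴)
    [IsProbabilityMeasure μ] (w : StrongDual ℝ (Lp ℝ 1 μ)) :
    ∃ ψ : 𝒴 → ℝ, Measurable ψ ∧ Integrable ψ μ ∧
      ∀ (s : Set 𝒴) (hs : MeasurableSet s),
        w (indicatorConstLp 1 hs (measure_ne_top μ s) 1) = ∫ y in s, ψ y ∂μ := by
  have hm : ∀ x : Lp ℝ 2 μ, MemLp x 1 μ := fun x =>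
    (Lp.memLp x).mono_exponent one_le_two
  let T : Lp ℝ 2 μ →ₗ[ℝ] ℝ :=
    { toFun := fun x => w ((hm x).toLp x)
      map_add' := fun x y => by
        rw [← map_add, ← MemLp.toLp_add]
        congr 1
        exact MemLp.toLp_congr _ _ (Lp.coeFn_add x y)
      map_smul' := fun c x => by
        rw [← map_smul, ← MemLp.toLp_const_smul]
        congr 1
        exact MemLp.toLp_congr _ _ (Lp.coeFn_smul c x) }
  let T' : StrongDual ℝ (Lp ℝ 2 μ) := T.mkContinuous ‖w‖ fun x => by
    refine (w.le_opNorm _).trans ?_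
    gcongr
    rw [Lp.norm_toLp, Lp.norm_def]
    exact ENNReal.toReal_mono (Lp.memLp x).2.ne
      (eLpNorm_le_eLpNorm_of_exponent_le one_le_two (Lp.memLp x).1)
  let z := (InnerProductSpace.toDual ℝ (Lp ℝ 2 μ)).symm T'
  have hz : Integrable z μ := memLp_one_iff_integrable.1 (hm z)
  refine ⟨hz.1.aemeasurable.mk z, hz.1.aemeasurable.measurable_mk,
    hz.congr hz.1.aemeasurable.ae_eq_mk, fun s hs => ?_⟩
  rw [← setIntegral_congr_ae hs (hz.1.aemeasurable.ae_eq_mk.mono fun _ h _ => h),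
    ← L2.inner_indicatorConstLp_one hs (measure_ne_top μ s) z, real_inner_comm,
    InnerProductSpace.toDual_symm_apply]
  change _ = w _
  congr 1
  apply Lp.ext
  refine indicatorConstLp_coeFn.trans (Filter.EventuallyEq.symm ?_)
  exact (MemLp.coeFn_toLp _).trans indicatorConstLp_coeFn

/-- A continuous functional on `L¹(μ)` that is nonnegative and at most `b * μ s` on the indicator
of each measurable `s` is integration against a measurable function with values in `[0, b]`. -/
lemma dual_L1_eq_integral {𝒴 : Type*} [MeasurableSpace 𝒴] (μ : Measure 𝒴)
    [IsProbabilityMeasure μ] (w : StrongDual ℝ (Lp ℝ 1 μ)) (b : ℝ) (hb : 0 ≤ b)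
    (hw : ∀ (s : Set 𝒴) (hs : MeasurableSet s),
      w (indicatorConstLp 1 hs (measure_ne_top μ s) 1) ∈ Set.Icc 0 (b * μ.real s)) :
    ∃ ψ : 𝒴 → ℝ, Measurable ψ ∧ (∀ y, ψ y ∈ Set.Icc 0 b) ∧
      ∀ x : Lp ℝ 1 μ, w x = ∫ y, ψ y * x y ∂μ := by
  obtain ⟨ψ, hψm, hψi, hψ⟩ := exists_integrable_repr μ w
  have h0 : 0 ≤ᵐ[μ] ψ := ae_nonneg_of_forall_setIntegral_nonneg hψi fun s hs _ => by
    rw [← hψ s hs]; exact (hw s hs).1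
  have h1 : ψ ≤ᵐ[μ] fun _ => b :=
    ae_le_of_forall_setIntegral_le hψi (integrable_const b) fun s hs _ => by
      rw [← hψ s hs]
      simpa [mul_comm] using (hw s hs).2
  set χ : 𝒴 → ℝ := fun y => max 0 (min b (ψ y)) with hχ
  have hχm : Measurable χ := measurable_const.max (measurable_const.min hψm)
  have hχb : ∀ y, χ y ∈ Set.Icc 0 b := fun y => ⟨le_max_left _ _, max_le hb (min_le_left _ _)⟩
  have hχe : ψ =ᵐ[μ] χ := by
    filter_upwards [h0, h1] with y h0 h1
    simp only [hχ]
    rw [min_eq_right h1]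
    exact (max_eq_right h0).symm
  have hbd : ∀ y, ‖χ y‖ ≤ b := fun y => by
    rw [Real.norm_of_nonneg (hχb y).1]; exact (hχb y).2
  have hint : ∀ {g : 𝒴 → ℝ}, Integrable g μ → Integrable (fun y => χ y * g y) μ := fun hg =>
    hg.bdd_mul hχm.aestronglyMeasurable (Filter.Eventually.of_forall hbd)
  refine ⟨χ, hχm, hχb, fun x => ?_⟩
  have hcont : Continuous fun x : Lp ℝ 1 μ => ∫ y, χ y * x y ∂μ := by
    refine (LipschitzWith.of_dist_le_mul (K := ⟨b, hb⟩) fun x x' => ?_).continuous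
    rw [L1.dist_eq_integral_dist, Real.dist_eq,
      ← integral_sub (hint (L1.integrable_coeFn x)) (hint (L1.integrable_coeFn x')),
      ← integral_const_mul, ← Real.norm_eq_abs]
    refine norm_integral_le_of_norm_le ?_ (Filter.Eventually.of_forall fun y => ?_)
    · exact (((L1.integrable_coeFn x).sub (L1.integrable_coeFn x')).norm).const_mul _
    · rw [← mul_sub, norm_mul]
      exact mul_le_mul_of_nonneg_right (hbd y) (norm_nonneg _)
  induction x using Lp.induction ENNReal.one_ne_top with
  | indicatorConst c hs hμs =>
    rename_i s
    rw [Lp.simpleFunc.coe_indicatorConst]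
    have : indicatorConstLp 1 hs hμs.ne c = c • indicatorConstLp (p := 1) (μ := μ) hs hμs.ne (1 : ℝ) := by
      apply Lp.ext
      filter_upwards [Lp.coeFn_smul c (indicatorConstLp (p := 1) (μ := μ) hs hμs.ne (1 : ℝ)),
        indicatorConstLp_coeFn (p := 1) (μ := μ) (hs := hs) (hμs := hμs.ne) (c := (1 : ℝ)),
        indicatorConstLp_coeFn (p := 1) (μ := μ) (hs := hs) (hμs := hμs.ne) (c := c)] with y a1 a2 a3
      rw [a1, a3, Pi.smul_apply, a2]
      by_cases hy : y ∈ s <;> simp [hy]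
    rw [this, map_smul, hψ s hs, setIntegral_congr_ae hs (hχe.mono fun _ h _ => h),
      ← integral_indicator hs, smul_eq_mul, ← integral_const_mul, ← this]
    refine integral_congr_ae ?_
    filter_upwards [indicatorConstLp_coeFn (p := 1) (μ := μ) (hs := hs) (hμs := hμs.ne) (c := c)] with y a
    rw [a]
    by_cases hy : y ∈ s <;> simp [hy, mul_comm]
  | add hf hg hd h1 h2 =>
    rw [map_add, h1, h2, ← integral_add (hint (L1.integrable_coeFn _)) (hint (L1.integrable_coeFn _))]
    refine integral_congr_ae ?_
    filter_upwards [Lp.coeFn_add (hf.toLp _) (hg.toLp _)] with y hy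
    rw [hy, Pi.add_apply, mul_add]
  | isClosed => exact isClosed_eq w.continuous hcont

/-- The minimax step for a convex set `G` of likelihood ratios with respect to `μ`. Separating the
strict hypograph of the concave functional `M x = ∫ min α (β x)` on `L¹(μ)` from `G × [V, ∞)` gives
an affine function that dominates `M` and is at most `V` on `G`; its linear part is `β * ψ`. -/
lemma exists_separating_test {𝒴 : Type*} [MeasurableSpace 𝒴] (μ : Measure 𝒴)
    [IsProbabilityMeasure μ] (G : Set (𝒴 → ℝ)) (hG : Convex ℝ G) (hne : G.Nonempty)
    (hGi : ∀ g ∈ G, Integrable g μ) (α β V : ℝ) (hα : 0 < α) (hβ : 0 < β)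
    (hV : ∀ g ∈ G, ∫ y, min α (β * g y) ∂μ ≤ V) :
    ∃ ψ : 𝒴 → ℝ, Measurable ψ ∧ (∀ y, ψ y ∈ Set.Icc (0 : ℝ) 1) ∧
      ∀ g ∈ G, α * ∫ y, (1 - ψ y) ∂μ + β * ∫ y, ψ y * g y ∂μ ≤ V := by
  have hmi : ∀ {g : 𝒴 → ℝ}, Integrable g μ → Integrable (fun y => min α (β * g y)) μ :=
    fun hg => (integrable_const α).inf (hg.const_mul β)
  let M : Lp ℝ 1 μ → ℝ := fun x => ∫ y, min α (β * x y) ∂μ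
  have hMc : Continuous M := by
    refine (LipschitzWith.of_dist_le_mul (K := ⟨β, hβ.le⟩) fun x x' => ?_).continuous
    rw [L1.dist_eq_integral_dist, Real.dist_eq,
      ← integral_sub (hmi (L1.integrable_coeFn x)) (hmi (L1.integrable_coeFn x')),
      ← integral_const_mul, ← Real.norm_eq_abs]
    refine norm_integral_le_of_norm_le ?_ (Filter.Eventually.of_forall fun y => ?_)
    · exact (((L1.integrable_coeFn x).sub (L1.integrable_coeFn x')).norm).const_mul _
    · have := abs_min_sub_min_le_max α (β * x y) α (β * x' y)
      rw [sub_self, abs_zero, max_eq_right (abs_nonneg _), ← mul_sub, abs_mul, abs_of_pos hβ] at this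
      exact this
  have hMconc : ConcaveOn ℝ Set.univ M := by
    refine ⟨convex_univ, fun x _ x' _ a b ha hb hab => ?_⟩
    simp only [M, smul_eq_mul]
    rw [← integral_const_mul, ← integral_const_mul,
      ← integral_add ((hmi (L1.integrable_coeFn x)).const_mul a)
        ((hmi (L1.integrable_coeFn x')).const_mul b)]
    refine integral_mono_ae (((hmi (L1.integrable_coeFn x)).const_mul a).add
        ((hmi (L1.integrable_coeFn x')).const_mul b)) (hmi (L1.integrable_coeFn _)) ?_
    filter_upwards [Lp.coeFn_add (a • x) (b • x'), Lp.coeFn_smul a x, Lp.coeFn_smul b x'] with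
      y h1 h2 h3
    rw [h1, Pi.add_apply, h2, h3]
    simp only [Pi.smul_apply, smul_eq_mul]
    refine le_min ?_ ?_
    · calc a * min α (β * x y) + b * min α (β * x' y) ≤ a * α + b * α := by
            gcongr <;> exact min_le_left _ _
        _ = α := by rw [← add_mul, hab, one_mul]
    · calc a * min α (β * x y) + b * min α (β * x' y) ≤ a * (β * x y) + b * (β * x' y) := by
            gcongr <;> exact min_le_right _ _
        _ = _ := by ring
  let S : Set (Lp ℝ 1 μ × ℝ) := {q | q.1 ∈ Set.univ ∧ q.2 < M q.1}
  let K : Set (Lp ℝ 1 μ × ℝ) := {x : Lp ℝ 1 μ | ∃ g ∈ G, x =ᵐ[μ] g} ×ˢ Set.Ici V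
  have hSo : IsOpen S := by
    simpa [S] using isOpen_lt continuous_snd (hMc.comp continuous_fst)
  have hK : Convex ℝ K := by
    refine Convex.prod ?_ (convex_Ici V)
    rintro x ⟨g, hg, hxg⟩ x' ⟨g', hg', hxg'⟩ a b ha hb hab
    refine ⟨a • g + b • g', hG hg hg' ha hb hab, ?_⟩
    filter_upwards [Lp.coeFn_add (a • x) (b • x'), Lp.coeFn_smul a x, Lp.coeFn_smul b x',
      hxg, hxg'] with y h1 h2 h3 h4 h5
    rw [h1, Pi.add_apply, h2, h3]
    simp [h4, h5]
  have hMG : ∀ (x : Lp ℝ 1 μ) (g : 𝒴 → ℝ), x =ᵐ[μ] g → M x = ∫ y, min α (β * g y) ∂μ :=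
    fun x g h => integral_congr_ae (h.mono fun y hy => by simp only [hy])
  have hdisj : Disjoint S K := by
    rw [Set.disjoint_left]
    rintro ⟨x, t⟩ ⟨-, h1⟩ ⟨⟨g, hg, hxg⟩, h2⟩
    have := hV g hg
    rw [← hMG x g hxg] at this
    simp only [Set.mem_Ici] at h1 h2
    linarith
  obtain ⟨F, c, hF1, hF2⟩ :=
    geometric_hahn_banach_open hMconc.convex_strict_hypograph hSo hK hdisj
  set r : ℝ := F (0, 1) with hr
  let v : StrongDual ℝ (Lp ℝ 1 μ) := F.comp (ContinuousLinearMap.inl ℝ _ ℝ)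
  have hFd : ∀ x t, F (x, t) = v x + t * r := fun x t => by
    have : (x, t) = (x, (0 : ℝ)) + t • ((0 : Lp ℝ 1 μ), (1 : ℝ)) := by simp
    rw [this, map_add, map_smul, smul_eq_mul]
    rfl
  have hA : ∀ x t, t < M x → v x + t * r < c := fun x t h => by
    rw [← hFd]; exact hF1 _ ⟨trivial, h⟩
  have hB : ∀ (x : Lp ℝ 1 μ) (g : 𝒴 → ℝ), g ∈ G → x =ᵐ[μ] g → c ≤ v x + V * r := fun x g hg hx => by
    rw [← hFd]; exact hF2 _ ⟨⟨g, hg, hx⟩, le_refl V⟩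
  have hrpos : 0 < r := by
    obtain ⟨g, hg⟩ := hne
    have e := (hGi g hg).coeFn_toL1
    have h2 := hB _ g hg e
    have h3 := hV g hg
    rw [← hMG _ g e] at h3
    have h1 := hA _ (M ((hGi g hg).toL1 g) - 1) (by linarith)
    by_contra hcon
    nlinarith
  -- Dividing by `-r` turns the separating hyperplane into the graph of `x ↦ c / r + w x`.
  let w : StrongDual ℝ (Lp ℝ 1 μ) := (-r⁻¹) • v
  have hw : ∀ x, w x = -r⁻¹ * v x := fun x => rfl
  have hA' : ∀ x, M x ≤ c / r + w x := fun x => by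
    refine le_of_forall_lt fun t ht => ?_
    have := hA x t ht
    rw [hw]
    have e : c / r + -r⁻¹ * v x = (c - v x) / r := by field_simp; ring
    rw [e, lt_div_iff₀ hrpos]
    linarith
  have hB' : ∀ (x : Lp ℝ 1 μ) (g : 𝒴 → ℝ), g ∈ G → x =ᵐ[μ] g → c / r + w x ≤ V := fun x g hg hx => by
    have := hB x g hg hx
    rw [hw]
    have e : c / r + -r⁻¹ * v x = (c - v x) / r := by field_simp; ring
    rw [e, div_le_iff₀ hrpos]
    linarith
  have hMind : ∀ (s : Set 𝒴) (hs : MeasurableSet s) (t : ℝ),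
      M (t • indicatorConstLp 1 hs (measure_ne_top μ s) 1) = min α (β * t) * μ.real s := by
    intro s hs t
    rw [hMG _ (s.indicator fun _ => t)]
    · have : (fun y => min α (β * s.indicator (fun _ => t) y))
          = s.indicator fun _ => min α (β * t) := by
        funext y
        by_cases hy : y ∈ s <;> simp [hy, hα.le]
      rw [this, integral_indicator hs]
      simp [mul_comm]
    · filter_upwards [Lp.coeFn_smul t (indicatorConstLp (p := 1) (μ := μ) hs (measure_ne_top μ s) (1 : ℝ)),
        indicatorConstLp_coeFn (p := 1) (μ := μ) (hs := hs) (hμs := measure_ne_top μ s) (c := (1 : ℝ))]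
        with y a1 a2
      rw [a1, Pi.smul_apply, a2]
      by_cases hy : y ∈ s <;> simp [hy]
  have hlin : ∀ a b : ℝ, (∀ t : ℝ, 0 ≤ t → 0 ≤ a + t * b) → 0 ≤ b := by
    intro a b h
    by_contra! hb
    have := h ((|a| + 1) / (-b)) (by have := abs_nonneg a; apply div_nonneg <;> linarith)
    have e : (|a| + 1) / (-b) * b = -(|a| + 1) := by
      rw [div_neg, neg_mul, div_mul_cancel₀ _ hb.ne]
    rw [e] at this
    linarith [le_abs_self a]
  obtain ⟨ψ, hψm, hψb, hψ⟩ := dual_L1_eq_integral μ w β hβ.le (by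
    intro s hs
    constructor
    -- `M` is nonnegative on `t • 1_s` and equals `-t * β * μ s` on `-t • 1_s`; let `t → ∞`.
    · refine hlin (c / r) _ fun t ht => ?_
      have h := hA' (t • indicatorConstLp 1 hs (measure_ne_top μ s) 1)
      rw [hMind, map_smul, smul_eq_mul] at h
      refine le_trans ?_ h
      have : 0 ≤ min α (β * t) := le_min hα.le (by positivity)
      positivity
    · rw [← sub_nonneg]
      refine hlin (c / r) _ fun t ht => ?_
      have h := hA' ((-t) • indicatorConstLp 1 hs (measure_ne_top μ s) 1)
      rw [hMind, map_smul, smul_eq_mul, min_eq_right (by nlinarith)] at h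
      linarith)
  have hψi : Integrable ψ μ := Integrable.of_bound hψm.aestronglyMeasurable β
    (Filter.Eventually.of_forall fun y => by
      rw [Real.norm_of_nonneg (hψb y).1]; exact (hψb y).2)
  -- Evaluate `M ≤ c / r + w` at the constant `α / β`, where both terms of the minimum equal `α`.
  have hc : α - α / β * ∫ y, ψ y ∂μ ≤ c / r := by
    have h := hA' ((α / β) • indicatorConstLp 1 MeasurableSet.univ (measure_ne_top μ _) 1)
    rw [hMind, map_smul, hψ] at h
    have e : ∫ y, ψ y * (indicatorConstLp (p := 1) (μ := μ) MeasurableSet.univ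
        (measure_ne_top μ _) (1 : ℝ)) y ∂μ = ∫ y, ψ y ∂μ := by
      refine integral_congr_ae ?_
      filter_upwards [indicatorConstLp_coeFn (p := 1) (μ := μ) (hs := MeasurableSet.univ)
        (hμs := measure_ne_top μ _) (c := (1 : ℝ))] with y a
      rw [a]; simp
    rw [e, mul_div_cancel₀ _ hβ.ne'] at h
    simp at h
    linarith
  refine ⟨fun y => ψ y / β, hψm.div_const β, fun y => ⟨div_nonneg (hψb y).1 hβ.le,
    (div_le_one hβ).2 (hψb y).2⟩, fun g hg => ?_⟩
  have e := (hGi g hg).coeFn_toL1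
  have h2 := hB' _ g hg e
  rw [hψ, integral_congr_ae (e.mono fun y hy => by simp only [hy] : _ =ᵐ[μ] fun y => ψ y * g y)] at h2
  rw [integral_sub (integrable_const _) (hψi.div_const β)]
  have e2 : ∫ y, ψ y / β * g y ∂μ = β⁻¹ * ∫ y, ψ y * g y ∂μ := by
    rw [← integral_const_mul]; congr 1; funext y; ring
  rw [e2, integral_div, mul_inv_cancel_left₀ hβ.ne']
  simp only [integral_const, probReal_univ, smul_eq_mul, mul_one]
  have e3 : α * (1 - (∫ y, ψ y ∂μ) / β) = α - α / β * ∫ y, ψ y ∂μ := by ring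
  rw [e3]
  linarith

/-- An indexed supremum `⨆ f ∈ B` in `ℝ` also ranges over `f ∉ B`, where the inner supremum is
empty and equals `0`; hence the condition `0 ≤ C`. -/
lemma le_biSup_real {ι : Type*} (B : Set ι) (F : ι → ℝ) (C : ℝ) (hC : 0 ≤ C)
    (hF : ∀ f ∈ B, F f ≤ C) {f : ι} (hf : f ∈ B) : F f ≤ ⨆ f ∈ B, F f := by
  refine le_ciSup_of_le ⟨C, ?_⟩ f (ciSup_pos (f := fun _ : f ∈ B => F f) hf).ge
  rintro _ ⟨g, rfl⟩
  exact Real.iSup_le (fun hg => hF g hg) hC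

lemma biSup_real_le {ι : Type*} (B : Set ι) (F : ι → ℝ) (C : ℝ) (hC : 0 ≤ C)
    (hF : ∀ f ∈ B, F f ≤ C) : ⨆ f ∈ B, F f ≤ C :=
  Real.iSup_le (fun f => Real.iSup_le (fun hf => hF f hf) hC) hC

lemma IsDensity.integrable {𝒴 : Type*} [MeasurableSpace 𝒴] {ν : Measure 𝒴} {p : 𝒴 → ℝ}
    (hp : IsDensity ν p) : Integrable p ν := by
  by_contra h
  have := hp.2.2
  rw [integral_undef h] at this
  exact zero_ne_one this

/-- The minimax test for densities. Passing to the probability measure `p₀ ν` and the ratios `f / p₀`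
needs no σ-finiteness of `ν`; on `{p₀ = 0}` the test rejects, at no cost under either hypothesis. -/
lemma exists_minimax_test {𝒴 : Type*} [MeasurableSpace 𝒴] (ν : Measure 𝒴)
    (p₀ : 𝒴 → ℝ) (hp₀ : IsDensity ν p₀)
    (B : Set (𝒴 → ℝ)) (hBconv : Convex ℝ B) (hne : B.Nonempty)
    (hBdens : ∀ f ∈ B, IsDensity ν f)
    (α β V : ℝ) (hα : 0 < α) (hβ : 0 < β)
    (hV : ∀ f ∈ B, ∫ y, min (α * p₀ y) (β * f y) ∂ν ≤ V) :
    ∃ φ : 𝒴 → ℝ, Measurable φ ∧ (∀ y, φ y ∈ Set.Icc (0 : ℝ) 1) ∧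
      ∀ f ∈ B, α * ∫ y, φ y * p₀ y ∂ν + β * ∫ y, (1 - φ y) * f y ∂ν ≤ V := by
  obtain ⟨hpm, hp0, hp1⟩ := id hp₀
  let μ : Measure 𝒴 := ν.withDensity fun y => ENNReal.ofReal (p₀ y)
  have hμ : IsProbabilityMeasure μ := ⟨by
    rw [withDensity_apply _ MeasurableSet.univ, Measure.restrict_univ,
      ← ofReal_integral_eq_lintegral_ofReal hp₀.integrable (Filter.Eventually.of_forall hp0),
      hp1, ENNReal.ofReal_one]⟩
  have hint : ∀ F : 𝒴 → ℝ, ∫ y, F y ∂μ = ∫ y, p₀ y * F y ∂ν := fun F => by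
    rw [integral_withDensity_eq_integral_toReal_smul hpm.ennreal_ofReal
      (Filter.Eventually.of_forall fun _ => ENNReal.ofReal_lt_top)]
    simp only [ENNReal.toReal_ofReal (hp0 _), smul_eq_mul]
  let D : (𝒴 → ℝ) →ₗ[ℝ] (𝒴 → ℝ) :=
    { toFun := fun f y => f y / p₀ y
      map_add' := fun f g => by funext y; simp [add_div]
      map_smul' := fun c f => by funext y; simp [mul_div_assoc] }
  have hD : ∀ f y, D f y = f y / p₀ y := fun _ _ => rfl
  obtain ⟨ψ, hψm, hψb, hψ⟩ := exists_separating_test μ (Set.image D B) (hBconv.linear_image D)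
    (hne.image D) (by
      rintro _ ⟨f, hf, rfl⟩
      refine (integrable_withDensity_iff_integrable_smul' hpm.ennreal_ofReal
        (Filter.Eventually.of_forall fun _ => ENNReal.ofReal_lt_top)).2 ?_
      refine (hBdens f hf).integrable.mono ?_ (Filter.Eventually.of_forall fun y => ?_)
      · exact (hpm.ennreal_ofReal.ennreal_toReal.mul
          ((hBdens f hf).1.div hpm)).aestronglyMeasurable
      · rw [hD, ENNReal.toReal_ofReal (hp0 y), smul_eq_mul]
        by_cases h : p₀ y = 0
        · simp [h]
        · rw [mul_div_cancel₀ _ h]) α β V hα hβ (by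
      rintro _ ⟨f, hf, rfl⟩
      refine le_of_eq_of_le ?_ (hV f hf)
      rw [hint]
      congr 1
      funext y
      rw [mul_min_of_nonneg _ _ (hp0 y), hD]
      by_cases h : p₀ y = 0
      · simp [h, mul_nonneg hβ.le ((hBdens f hf).2.1 y)]
      · congr 1
        · ring
        · field_simp)
  have hmeas : MeasurableSet {y | p₀ y = 0} := hpm (measurableSet_singleton 0)
  classical
  refine ⟨fun y => if p₀ y = 0 then 1 else 1 - ψ y,
    Measurable.ite hmeas measurable_const (measurable_const.sub hψm), fun y => ?_, fun f hf => ?_⟩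
  · dsimp only
    split_ifs
    · simp
    · exact ⟨by linarith [(hψb y).2], by linarith [(hψb y).1]⟩
  · refine le_of_eq_of_le ?_ (hψ _ ⟨f, hf, rfl⟩)
    rw [hint, hint]
    congr 3
    · funext y
      dsimp only
      split_ifs with h
      · simp [h]
      · ring
    · funext y
      rw [hD]
      dsimp only
      split_ifs with h
      · simp [h]
      · field_simp
        ring

/-- Existence of a test for a convex set of densities (extension of Lemma 6.1 of
Ghosal–Lember–van der Vaart, 2008). -/
theorem stmt11 {𝒴 : Type*} [MeasurableSpace 𝒴] (ν : Measure 𝒴)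
    (p₀ : 𝒴 → ℝ) (hp₀ : IsDensity ν p₀)
    (B : Set (𝒴 → ℝ)) (hBconv : Convex ℝ B) (hBdens : ∀ f ∈ B, IsDensity ν f)
    (α β u : ℝ) (hα : 0 < α) (hβ : 0 < β) (hu : u ∈ Set.Ioo (0 : ℝ) 1) :
    ∃ φ : 𝒴 → ℝ, Measurable φ ∧ (∀ y, φ y ∈ Set.Icc (0 : ℝ) 1) ∧
      (⨆ f ∈ B, (α * ∫ y, φ y * p₀ y ∂ν + β * ∫ y, (1 - φ y) * f y ∂ν)) =
        (⨆ f ∈ B, ∫ y, min (α * p₀ y) (β * f y) ∂ν) ∧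
      (⨆ f ∈ B, ∫ y, min (α * p₀ y) (β * f y) ∂ν) ≤
        α ^ (1 - u) * β ^ u * ⨆ f ∈ B, ∫ y, p₀ y ^ (1 - u) * f y ^ u ∂ν ∧
      (∫ y, φ y * p₀ y ∂ν) ≤
        (α / β) ^ (-u) * ⨆ f ∈ B, ∫ y, (p₀ y / f y) ^ (-u) * p₀ y ∂ν ∧
      (⨆ f ∈ B, ∫ y, (1 - φ y) * f y ∂ν) ≤
        (α / β) ^ (1 - u) * ⨆ f ∈ B, ∫ y, (p₀ y / f y) ^ (-u) * p₀ y ∂ν := by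
  obtain ⟨hu0, hu1⟩ := hu
  obtain rfl | hne := B.eq_empty_or_nonempty
  · exact ⟨fun _ => 0, measurable_const, by simp, by simp, by simp, by simp, by simp⟩
  obtain ⟨hpm, hp0, hp1⟩ := id hp₀
  have hpi := hp₀.integrable
  -- Where `p₀` or `f` vanishes both sides are `0`, by `x / 0 = 0` and `0 ^ (-u) = 0`.
  have hpow : ∀ f ∈ B, ∀ y, (p₀ y / f y) ^ (-u) * p₀ y = p₀ y ^ (1 - u) * f y ^ u := by
    intro f hf y
    have hf0 := (hBdens f hf).2.1 y
    rcases (hp0 y).eq_or_lt with h | h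
    · simp [← h, Real.zero_rpow (sub_pos.2 hu1).ne']
    rcases hf0.eq_or_lt with h' | h'
    · simp [← h', Real.zero_rpow hu0.ne', Real.zero_rpow (neg_ne_zero.2 hu0.ne')]
    · rw [Real.div_rpow h.le h'.le, Real.rpow_neg h'.le, div_inv_eq_mul, sub_eq_add_neg,
        Real.rpow_add h, Real.rpow_one]
      ring
  have hyoung : ∀ f ∈ B, ∀ y, p₀ y ^ (1 - u) * f y ^ u ≤ (1 - u) * p₀ y + u * f y :=
    fun f hf y => Real.geom_mean_le_arith_mean2_weighted (sub_pos.2 hu1).le hu0.le (hp0 y)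
      ((hBdens f hf).2.1 y) (by ring)
  have hRnn : ∀ f ∈ B, ∀ y, 0 ≤ p₀ y ^ (1 - u) * f y ^ u := fun f hf y =>
    mul_nonneg (Real.rpow_nonneg (hp0 y) _) (Real.rpow_nonneg ((hBdens f hf).2.1 y) _)
  have hYi : ∀ f ∈ B, Integrable (fun y => (1 - u) * p₀ y + u * f y) ν := fun f hf =>
    (hpi.const_mul _).add ((hBdens f hf).integrable.const_mul _)
  have hRi : ∀ f ∈ B, Integrable (fun y => p₀ y ^ (1 - u) * f y ^ u) ν := fun f hf =>
    (hYi f hf).mono' ((hpm.pow_const _).mul ((hBdens f hf).1.pow_const _)).aestronglyMeasurable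
      (Filter.Eventually.of_forall fun y => by
        rw [Real.norm_of_nonneg (hRnn f hf y)]; exact hyoung f hf y)
  have hR1 : ∀ f ∈ B, ∫ y, p₀ y ^ (1 - u) * f y ^ u ∂ν ≤ 1 := fun f hf => by
    refine (integral_mono (hRi f hf) (hYi f hf) (hyoung f hf)).trans_eq ?_
    rw [integral_add (hpi.const_mul _) ((hBdens f hf).integrable.const_mul _),
      integral_const_mul, integral_const_mul, hp1, (hBdens f hf).2.2]
    ring
  have hReq : (⨆ f ∈ B, ∫ y, (p₀ y / f y) ^ (-u) * p₀ y ∂ν) =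
      ⨆ f ∈ B, ∫ y, p₀ y ^ (1 - u) * f y ^ u ∂ν :=
    iSup_congr fun f => iSup_congr fun hf => integral_congr_ae
      (Filter.Eventually.of_forall (hpow f hf))
  rw [hReq]
  set R := ⨆ f ∈ B, ∫ y, p₀ y ^ (1 - u) * f y ^ u ∂ν with hR
  have hRle : ∀ f ∈ B, ∫ y, p₀ y ^ (1 - u) * f y ^ u ∂ν ≤ R := fun f hf =>
    le_biSup_real B (fun f => ∫ y, p₀ y ^ (1 - u) * f y ^ u ∂ν) 1 zero_le_one hR1 hf
  have hR0 : 0 ≤ R := by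
    obtain ⟨f, hf⟩ := hne
    exact (integral_nonneg (hRnn f hf)).trans (hRle f hf)
  have hmi : ∀ f ∈ B, Integrable (fun y => min (α * p₀ y) (β * f y)) ν := fun f hf =>
    (hpi.const_mul α).inf ((hBdens f hf).integrable.const_mul β)
  have hmR : ∀ f ∈ B, ∫ y, min (α * p₀ y) (β * f y) ∂ν ≤ α ^ (1 - u) * β ^ u * R := by
    intro f hf
    refine le_trans ?_ (mul_le_mul_of_nonneg_left (hRle f hf) (by positivity))
    rw [← integral_const_mul]
    refine integral_mono (hmi f hf) ((hRi f hf).const_mul _) fun y => ?_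
    have ha : 0 ≤ α * p₀ y := mul_nonneg hα.le (hp0 y)
    have hb : 0 ≤ β * f y := mul_nonneg hβ.le ((hBdens f hf).2.1 y)
    have hm : 0 ≤ min (α * p₀ y) (β * f y) := le_min ha hb
    calc min (α * p₀ y) (β * f y)
        = min (α * p₀ y) (β * f y) ^ (1 - u) * min (α * p₀ y) (β * f y) ^ u := by
          rw [← Real.rpow_add_of_nonneg hm (sub_pos.2 hu1).le hu0.le, sub_add_cancel,
            Real.rpow_one]
      _ ≤ (α * p₀ y) ^ (1 - u) * (β * f y) ^ u := by
          gcongr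
          · exact min_le_left _ _
          · exact min_le_right _ _
      _ = α ^ (1 - u) * β ^ u * (p₀ y ^ (1 - u) * f y ^ u) := by
          rw [Real.mul_rpow hα.le (hp0 y), Real.mul_rpow hβ.le ((hBdens f hf).2.1 y)]
          ring
  have hC0 : 0 ≤ α ^ (1 - u) * β ^ u * R := by positivity
  set V := ⨆ f ∈ B, ∫ y, min (α * p₀ y) (β * f y) ∂ν with hVdef
  have hVle : ∀ f ∈ B, ∫ y, min (α * p₀ y) (β * f y) ∂ν ≤ V := fun f hf =>
    le_biSup_real B (fun f => ∫ y, min (α * p₀ y) (β * f y) ∂ν) _ hC0 hmR hf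
  have hVR : V ≤ α ^ (1 - u) * β ^ u * R := biSup_real_le B _ _ hC0 hmR
  have hV0 : 0 ≤ V := by
    obtain ⟨f, hf⟩ := hne
    refine (integral_nonneg fun y => ?_).trans (hVle f hf)
    exact le_min (mul_nonneg hα.le (hp0 y)) (mul_nonneg hβ.le ((hBdens f hf).2.1 y))
  obtain ⟨φ, hφm, hφb, hφ⟩ :=
    exists_minimax_test ν p₀ hp₀ B hBconv hne hBdens α β V hα hβ hVle
  have hφn : ∀ y, ‖φ y‖ ≤ 1 := fun y => by
    rw [Real.norm_of_nonneg (hφb y).1]; exact (hφb y).2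
  have hφn' : ∀ y, ‖1 - φ y‖ ≤ 1 := fun y => by
    rw [Real.norm_of_nonneg (sub_nonneg.2 (hφb y).2)]; linarith [(hφb y).1]
  have hi1 : Integrable (fun y => φ y * p₀ y) ν :=
    hpi.bdd_mul hφm.aestronglyMeasurable (Filter.Eventually.of_forall hφn)
  have hi2 : ∀ f ∈ B, Integrable (fun y => (1 - φ y) * f y) ν := fun f hf =>
    (hBdens f hf).integrable.bdd_mul (measurable_const.sub hφm).aestronglyMeasurable
      (Filter.Eventually.of_forall hφn')
  have hn1 : 0 ≤ ∫ y, φ y * p₀ y ∂ν := integral_nonneg fun y => mul_nonneg (hφb y).1 (hp0 y)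
  have hn2 : ∀ f ∈ B, 0 ≤ ∫ y, (1 - φ y) * f y ∂ν := fun f hf =>
    integral_nonneg fun y => mul_nonneg (sub_nonneg.2 (hφb y).2) ((hBdens f hf).2.1 y)
  have hlow : ∀ f ∈ B, ∫ y, min (α * p₀ y) (β * f y) ∂ν ≤
      α * ∫ y, φ y * p₀ y ∂ν + β * ∫ y, (1 - φ y) * f y ∂ν := by
    intro f hf
    rw [← integral_const_mul, ← integral_const_mul,
      ← integral_add (hi1.const_mul α) ((hi2 f hf).const_mul β)]
    refine integral_mono (hmi f hf) ((hi1.const_mul α).add ((hi2 f hf).const_mul β)) fun y => ?_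
    have h1 := mul_le_mul_of_nonneg_left (min_le_left (α * p₀ y) (β * f y)) (hφb y).1
    have h2 := mul_le_mul_of_nonneg_left (min_le_right (α * p₀ y) (β * f y))
      (sub_nonneg.2 (hφb y).2)
    dsimp only
    linarith
  refine ⟨φ, hφm, hφb, ?_, hVR, ?_, ?_⟩
  · refine le_antisymm (biSup_real_le B _ V hV0 hφ) ?_
    have key := fun f (hf : f ∈ B) => le_biSup_real B
      (fun f => α * ∫ y, φ y * p₀ y ∂ν + β * ∫ y, (1 - φ y) * f y ∂ν) V hV0 hφ hf
    refine biSup_real_le B _ _ ?_ fun f hf => (hlow f hf).trans (key f hf)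
    obtain ⟨f, hf⟩ := hne
    refine le_trans ?_ (key f hf)
    have := hn2 f hf
    positivity
  · obtain ⟨f, hf⟩ := hne
    have h := (hφ f hf).trans hVR
    have h' := mul_nonneg hβ.le (hn2 f hf)
    have e : (α / β) ^ (-u) * R = α ^ (1 - u) * β ^ u * R / α := by
      rw [Real.div_rpow hα.le hβ.le, Real.rpow_neg hβ.le, div_inv_eq_mul, sub_eq_add_neg,
        Real.rpow_add hα, Real.rpow_one]
      field_simp
    rw [e, le_div_iff₀ hα]
    linarith
  · have e : (α / β) ^ (1 - u) * R = α ^ (1 - u) * β ^ u * R / β := by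
      have h1 : β ^ (1 - u) = β / β ^ u := by rw [Real.rpow_sub hβ, Real.rpow_one]
      rw [Real.div_rpow hα.le hβ.le, h1]
      have : β ^ u ≠ 0 := (Real.rpow_pos_of_pos hβ u).ne'
      field_simp
    rw [e]
    refine biSup_real_le B _ _ (by positivity) fun f hf => ?_
    have h := (hφ f hf).trans hVR
    have h' := mul_nonneg hα.le hn1
    rw [le_div_iff₀ hβ]
    linarith
end

section
/- For any u ∈ (0,1) and t > 0, the constant c(u,t) = ( t/(t+u) )^{−t/(t+u)} · ( u/(t+u) )^{−u/(t+u)} · ( u^u (1−u)^{1−u} )^{−t/(u+t)} satisfies c(u,t) ≤ 4. -/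
/-! With `s = t / (t + u)` and `H` the binary entropy in natural units, the constant equals
`exp (H s + s * H u)`. Since `H ≤ log 2` and `0 ≤ s ≤ 1`, it is at most
`exp (2 * log 2) = 4`. -/

theorem rpow_self_mul_rpow_one_sub (p : ℝ) (h0 : 0 < p) (h1 : 0 < 1 - p) :
    p ^ p * (1 - p) ^ (1 - p) = Real.exp (-Real.binEntropy p) := by
  rw [Real.rpow_def_of_pos h0, Real.rpow_def_of_pos h1, ← Real.exp_add,
    Real.binEntropy, Real.log_inv, Real.log_inv]
  ring_nf

/-- The constant `c(u,t) = (t/(t+u))^{−t/(t+u)} (u/(t+u))^{−u/(t+u)} (u^u (1−u)^{1−u})^{−t/(u+t)}`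
is at most `4` for all `u ∈ (0,1)` and `t > 0`. -/
theorem stmt14 (u t : ℝ) (hu : u ∈ Set.Ioo (0 : ℝ) 1) (ht : 0 < t) :
    (t / (t + u)) ^ (-(t / (t + u))) * (u / (t + u)) ^ (-(u / (t + u))) *
      (u ^ u * (1 - u) ^ (1 - u)) ^ (-(t / (u + t))) ≤ 4 := by
  obtain ⟨hu0, hu1⟩ := hu
  have hs0 : 0 < t / (t + u) := by positivity
  have hr0 : 0 < u / (t + u) := by positivity
  have hr : u / (t + u) = 1 - t / (t + u) := by field_simp; ring
  rw [add_comm u t, hr]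
  rw [hr] at hr0
  generalize t / (t + u) = s at *
  rw [Real.rpow_neg hs0.le, Real.rpow_neg hr0.le, ← mul_inv,
    rpow_self_mul_rpow_one_sub s hs0 hr0,
    rpow_self_mul_rpow_one_sub u hu0 (by linarith), ← Real.exp_neg, ← Real.exp_mul,
    ← Real.exp_add]
  have hHs : Real.binEntropy s ≤ Real.log 2 := Real.binEntropy_le_log_two
  have hHu : Real.binEntropy u ≤ Real.log 2 := Real.binEntropy_le_log_two
  have hlog : 0 ≤ Real.log 2 := Real.log_nonneg (by norm_num)
  calc Real.exp (- -Real.binEntropy s + -Real.binEntropy u * -s)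
      ≤ Real.exp (Real.log 2 + Real.log 2) := by
        apply Real.exp_le_exp.mpr
        nlinarith
    _ = 4 := by rw [Real.exp_add, Real.exp_log (by norm_num)]; norm_num
end

section
/- Let f : [0,∞) → [0,∞) be nonincreasing with f^u integrable on (0,∞) for some u ∈ (0,1), and let π be a probability density on ℝ of the form π(θ) = f(|θ|). Then for any h > 0, Σ_{j=−∞}^{∞} ( ∫_{jh}^{(j+1)h} π(θ) dθ )^u ≤ [ 2h f(0)^u + ∫_{−∞}^{∞} f(|w|)^u dw ] · h^{u−1}. In particular the ℓ_u-sum of the prior masses over the partition into intervals of length h is finite even though the support of π is all of ℝ. -/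
open MeasureTheory

/-!
On the cell `(nh, (n+1)h]`, and on its mirror image, monotonicity bounds the density by `f (nh)`, so
each of the two cells contributes at most `(h f(nh))^u = h^(u-1) · h f(nh)^u` (`cell_rpow_le`).
The function `f^u` is again nonincreasing, so the Riemann sum `∑_{n ≥ 1} h f(nh)^u` lies below
`∫_0^∞ f^u`, and the term `n = 0` adds `h f(0)^u` (`sum_grid_le`). Splitting the sum over `ℤ` into
`j = n` and `j = -(n+1)` doubles this bound, and `∫_ℝ f(|w|)^u dw = 2 ∫_0^∞ f^u`.
-/

/-- Riemann-sum comparison for a nonincreasing function: right endpoints are dominated by the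
integral, and the left endpoint `0` is counted separately. -/
lemma sum_grid_le (g : ℝ → ℝ) (hg0 : ∀ x, 0 ≤ g x)
    (hmono : ∀ x y : ℝ, 0 ≤ x → x ≤ y → g y ≤ g x)
    (hint : IntegrableOn g (Set.Ioi (0 : ℝ))) (h : ℝ) (hh : 0 < h) (N : ℕ) :
    ∑ n ∈ Finset.range N, h * g (n * h) ≤ h * g 0 + ∫ w in Set.Ioi (0 : ℝ), g w := by
  have hle : ∀ n : ℕ, (n : ℝ) * h ≤ ((n + 1 : ℕ) : ℝ) * h := fun n => by
    push_cast; nlinarith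
  have hn0 : ∀ n : ℕ, 0 ≤ (n : ℝ) * h := fun n => by positivity
  have hII : ∀ n : ℕ, IntervalIntegrable g volume ((n : ℝ) * h) (((n + 1 : ℕ) : ℝ) * h) := by
    intro n
    rw [intervalIntegrable_iff_integrableOn_Ioc_of_le (hle n)]
    exact hint.mono_set fun x hx => lt_of_le_of_lt (hn0 n) hx.1
  have hterm : ∀ n : ℕ, h * g (((n + 1 : ℕ) : ℝ) * h) ≤
      ∫ w in ((n : ℝ) * h)..(((n + 1 : ℕ) : ℝ) * h), g w := by
    intro n
    have key := intervalIntegral.integral_mono_on (hle n)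
      (intervalIntegrable_const (c := g (((n + 1 : ℕ) : ℝ) * h))) (hII n)
      (fun x hx => hmono x _ ((hn0 n).trans hx.1) hx.2)
    rw [intervalIntegral.integral_const, smul_eq_mul] at key
    refine le_trans (le_of_eq ?_) key
    push_cast; ring
  have hpart : ∑ n ∈ Finset.range N, h * g (((n + 1 : ℕ) : ℝ) * h) ≤
      ∫ w in Set.Ioi (0 : ℝ), g w := by
    refine (Finset.sum_le_sum fun n _ => hterm n).trans ?_
    rw [intervalIntegral.sum_integral_adjacent_intervals (a := fun n : ℕ => (n : ℝ) * h)
      fun n _ => hII n]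
    simp only [Nat.cast_zero, zero_mul]
    rw [intervalIntegral.integral_of_le (hn0 N)]
    exact setIntegral_mono_set hint (Filter.Eventually.of_forall hg0)
      (Filter.Eventually.of_forall fun x hx => hx.1)
  calc ∑ n ∈ Finset.range N, h * g (n * h)
      ≤ ∑ n ∈ Finset.range (N + 1), h * g (n * h) :=
        Finset.sum_le_sum_of_subset_of_nonneg (Finset.range_mono N.le_succ)
          fun n _ _ => mul_nonneg hh.le (hg0 _)
    _ = ∑ n ∈ Finset.range N, h * g (((n + 1 : ℕ) : ℝ) * h) + h * g 0 := by
        rw [Finset.sum_range_succ']; simp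
    _ ≤ _ := by linarith

/-- The bound on one cell `(a, b]` of length `h` all of whose points have absolute value at
least `c`. -/
lemma cell_rpow_le (f : ℝ → ℝ) (hf0 : ∀ x, 0 ≤ f x)
    (hmono : ∀ x y : ℝ, 0 ≤ x → x ≤ y → f y ≤ f x) (u : ℝ) (hu : 0 < u)
    (h : ℝ) (hh : 0 < h) (a b c : ℝ) (hab : b - a = h) (hc : 0 ≤ c)
    (hcell : ∀ θ ∈ Set.Ioc a b, c ≤ |θ|) :
    (∫ θ in Set.Ioc a b, f |θ|) ^ u ≤ h ^ (u - 1) * (h * f c ^ u) := by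
  have h1 : ∫ θ in Set.Ioc a b, f |θ| ≤ h * f c := by
    have := norm_setIntegral_le_of_norm_le_const (μ := volume) (s := Set.Ioc a b)
      (f := fun θ => f |θ|) (C := f c) (by simp) (fun θ hθ => by
        rw [Real.norm_of_nonneg (hf0 _)]; exact hmono _ _ hc (hcell θ hθ))
    rw [Real.volume_real_Ioc_of_le (by linarith), hab, mul_comm] at this
    exact (le_abs_self _).trans this
  refine (Real.rpow_le_rpow (integral_nonneg fun θ => hf0 _) h1 hu.le).trans (le_of_eq ?_)
  rw [Real.mul_rpow hh.le (hf0 _), Real.rpow_sub_one hh.ne']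
  field_simp

/-- The tail computation bounding the `ℓ_u`-sum of the prior masses over a grid of mesh `h`
for a symmetric prior density `π(θ) = f(|θ|)` that is nonincreasing away from the origin:
`∑_{j∈ℤ} (∫_{jh}^{(j+1)h} π(θ) dθ)^u ≤ [2h f(0)^u + ∫ f(|w|)^u dw] h^{u−1}`; in particular
the `ℓ_u`-sum is finite (summable) even though the support of the prior is all of `ℝ`. -/
theorem stmt17 (f : ℝ → ℝ) (hfm : Measurable f) (hf0 : ∀ x, 0 ≤ f x)
    (hmono : ∀ x y : ℝ, 0 ≤ x → x ≤ y → f y ≤ f x)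
    (u : ℝ) (hu : u ∈ Set.Ioo (0 : ℝ) 1)
    (hint : IntegrableOn (fun w => f w ^ u) (Set.Ioi (0 : ℝ)))
    (hdens : (∫ θ : ℝ, f |θ|) = 1)
    (h : ℝ) (hh : 0 < h) :
    Summable (fun j : ℤ => (∫ θ in Set.Ioc ((j : ℝ) * h) (((j : ℝ) + 1) * h), f |θ|) ^ u) ∧
    (∑' j : ℤ, (∫ θ in Set.Ioc ((j : ℝ) * h) (((j : ℝ) + 1) * h), f |θ|) ^ u) ≤
      (2 * h * f 0 ^ u + ∫ w : ℝ, f |w| ^ u) * h ^ (u - 1) := by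
  obtain ⟨hu0, -⟩ := hu
  set a : ℤ → ℝ := fun j => (∫ θ in Set.Ioc ((j : ℝ) * h) (((j : ℝ) + 1) * h), f |θ|) ^ u with ha
  have ha0 : ∀ j, 0 ≤ a j := fun j =>
    Real.rpow_nonneg (integral_nonneg fun θ => hf0 _) _
  have hpos : ∀ n : ℕ, a n ≤ h ^ (u - 1) * (h * f (n * h) ^ u) := by
    intro n
    refine cell_rpow_le f hf0 hmono u hu0 h hh _ _ _ (by ring) (by positivity) fun θ hθ => ?_
    have := hθ.1
    push_cast at this
    exact this.le.trans (le_abs_self _)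
  have hneg : ∀ n : ℕ, a (-(n + 1 : ℤ)) ≤ h ^ (u - 1) * (h * f (n * h) ^ u) := by
    intro n
    refine cell_rpow_le f hf0 hmono u hu0 h hh _ _ _ (by ring) (by positivity) fun θ hθ => ?_
    have := hθ.2
    push_cast at this
    refine le_trans ?_ (neg_le_abs θ)
    linarith
  set B : ℝ := h ^ (u - 1) * (h * f 0 ^ u + ∫ w in Set.Ioi (0 : ℝ), f w ^ u) with hB
  have hsum : ∀ N : ℕ, ∑ n ∈ Finset.range N, h ^ (u - 1) * (h * f (n * h) ^ u) ≤ B := by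
    intro N
    rw [← Finset.mul_sum]
    exact mul_le_mul_of_nonneg_left
      (sum_grid_le (fun w => f w ^ u) (fun x => Real.rpow_nonneg (hf0 x) _)
        (fun x y hx hxy => Real.rpow_le_rpow (hf0 y) (hmono x y hx hxy) hu0.le) hint h hh N)
      (Real.rpow_nonneg hh.le _)
  have hposN := fun N => (Finset.sum_le_sum fun n (_ : n ∈ Finset.range N) => hpos n).trans (hsum N)
  have hnegN := fun N => (Finset.sum_le_sum fun n (_ : n ∈ Finset.range N) => hneg n).trans (hsum N)
  have s1 : Summable fun n : ℕ => a n := summable_of_sum_range_le (fun n => ha0 _) hposN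
  have s2 : Summable fun n : ℕ => a (-(n + 1 : ℤ)) :=
    summable_of_sum_range_le (fun n => ha0 _) hnegN
  refine ⟨Summable.of_nat_of_neg_add_one s1 s2, ?_⟩
  rw [tsum_of_nat_of_neg_add_one s1 s2]
  have t1 := Real.tsum_le_of_sum_range_le (fun n : ℕ => ha0 n) hposN
  have t2 := Real.tsum_le_of_sum_range_le (fun n : ℕ => ha0 (-(n + 1 : ℤ))) hnegN
  rw [integral_comp_abs (f := fun w => f w ^ u)]
  refine (add_le_add t1 t2).trans (le_of_eq ?_)
  rw [hB]
  ring
end
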